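/- arXiv:1811.08405 — 2 statements merged into one kernel-verified Lean document; each statement's English description precedes it below -/
import Mathlib

section
/- For every α, β, γ ∈ ℂ, the cyclic twist matrices K⁽²⁾ = αE₁₃ + βE₂₁ + γE₃₂ and K⁽³⁾ = βE₁₂ + γE₂₃ + αE₃₁ are symmetries of the principal gradation R-matrix: for all u ∈ ℂ with u ≠ 0, R_q(u)(K⁽²⁾ ⊗ K⁽²⁾) = (K⁽²⁾ ⊗ K⁽²⁾)R_q(u) and R_q(u)(K⁽³⁾ ⊗ K⁽³⁾) = (K⁽³⁾ ⊗ K⁽³⁾)R_q(u). Moreover every diagonal matrix K⁽¹⁾ = diag(α, β, γ) is also such a symmetry. -/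
open Matrix Kronecker BigOperators

/-- Elementary 3×3 matrices `E i j`. -/
noncomputable def Eb (i j : Fin 3) : Matrix (Fin 3) (Fin 3) ℂ :=
  Matrix.single i j 1

/-- Principal gradation trigonometric R-matrix of `U_q(gl₃^)`, with spectral
parameter `λ = u³` parametrized by the cube root `u`. -/
noncomputable def RpM (q u : ℂ) : Matrix (Fin 3 × Fin 3) (Fin 3 × Fin 3) ℂ :=
  (∑ k : Fin 3, ∑ p : Fin 3,
    if k = p then (u ^ 3 * q - (u ^ 3 * q)⁻¹) • (Eb k k ⊗ₖ Eb k k)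
    else (u ^ 3 - (u ^ 3)⁻¹) • (Eb k k ⊗ₖ Eb p p))
  + (q - q⁻¹) • ∑ k : Fin 3, ∑ p : Fin 3,
      (if k < p then
        u ^ ((3 : ℤ) - 2 * (((p : ℕ) : ℤ) - ((k : ℕ) : ℤ))) • (Eb k p ⊗ₖ Eb p k)
        + u ^ (2 * (((p : ℕ) : ℤ) - ((k : ℕ) : ℤ)) - (3 : ℤ)) • (Eb p k ⊗ₖ Eb k p)
      else 0)

/-- Diagonal twist matrix `K⁽¹⁾ = diag(α, β, γ)`. -/
noncomputable def Ktw1 (α β γ : ℂ) : Matrix (Fin 3) (Fin 3) ℂ :=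
  Matrix.diagonal ![α, β, γ]

/-- Cyclic twist matrix `K⁽²⁾ = αE₁₃ + βE₂₁ + γE₃₂`. -/
noncomputable def Ktw2 (α β γ : ℂ) : Matrix (Fin 3) (Fin 3) ℂ :=
  α • Eb 0 2 + β • Eb 1 0 + γ • Eb 2 1

/-- Cyclic twist matrix `K⁽³⁾ = βE₁₂ + γE₂₃ + αE₃₁`. -/
noncomputable def Ktw3 (α β γ : ℂ) : Matrix (Fin 3) (Fin 3) ℂ :=
  β • Eb 0 1 + γ • Eb 1 2 + α • Eb 2 0

/-!
Writing `P` for the flip of the two tensor factors, `R_q(u) = D + D' P` with `D` and `D'` diagonal.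
Since `u ^ (3 - 2 d)` is `u` for `d = 1` and `u⁻¹` for `d = 2`, all weights in `D` and `D'` depend
only on the difference of the two tensor indices modulo 3. Each twist is a diagonal matrix times a
power of the cyclic permutation matrix `C`. Now `P` commutes with every `K ⊗ K`, while `D` and `D'`
commute with diagonal matrices and, by translation invariance of the weights, with `C ⊗ C`.
-/

section Flip

variable {n R : Type*} [Fintype n] [DecidableEq n]

variable (n R) in
/-- The flip `x ⊗ y ↦ y ⊗ x` of the two tensor factors, as a matrix. -/
def flipMatrix [Zero R] [One R] : Matrix (n × n) (n × n) R :=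
  (Equiv.prodComm n n).toPEquiv.toMatrix

theorem flipMatrix_mul_kronecker [CommSemiring R] (A B : Matrix n n R) :
    flipMatrix n R * (A ⊗ₖ B) = (B ⊗ₖ A) * flipMatrix n R := by
  rw [flipMatrix, PEquiv.toMatrix_toPEquiv_mul, PEquiv.mul_toMatrix_toPEquiv]
  ext ⟨a, b⟩ ⟨c, d⟩
  exact mul_comm (A b c) (B a d)

theorem single_swap_eq_single_mul_flipMatrix [NonAssocSemiring R] (k p : n) (c : R) :
    Matrix.single (k, p) (p, k) c = Matrix.single (k, p) (k, p) c * flipMatrix n R := by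
  rw [flipMatrix, PEquiv.mul_toMatrix_toPEquiv]
  ext i ⟨a, b⟩
  simp [Matrix.single_apply, and_comm]

end Flip

section Monomial

variable {m n R : Type*} [DecidableEq m] [DecidableEq n]

theorem permMatrix_kronecker_permMatrix [NonAssocSemiring R] (σ : Equiv.Perm m) (τ : Equiv.Perm n) :
    σ.permMatrix R ⊗ₖ τ.permMatrix R = Equiv.Perm.permMatrix R (σ.prodCongr τ) := by
  ext ⟨a, b⟩ ⟨c, d⟩
  simp [← ite_and, and_comm]

variable [Fintype m] [Fintype n]

/-- The monomial matrix `∑ i, v i E_{i, σ i}`. -/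
def monomialMatrix [NonAssocSemiring R] (σ : Equiv.Perm n) (v : n → R) : Matrix n n R :=
  diagonal v * σ.permMatrix R

theorem monomialMatrix_apply [NonAssocSemiring R] (σ : Equiv.Perm n) (v : n → R) (i j : n) :
    monomialMatrix σ v i j = if σ i = j then v i else 0 := by
  simp [monomialMatrix, eq_comm]

theorem monomialMatrix_kronecker_monomialMatrix [CommSemiring R] (σ : Equiv.Perm m)
    (τ : Equiv.Perm n) (v : m → R) (w : n → R) :
    monomialMatrix σ v ⊗ₖ monomialMatrix τ w =
      monomialMatrix (σ.prodCongr τ) fun i => v i.1 * w i.2 := by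
  rw [monomialMatrix, monomialMatrix, Matrix.mul_kronecker_mul, diagonal_kronecker_diagonal,
    permMatrix_kronecker_permMatrix, monomialMatrix]

theorem commute_diagonal_monomialMatrix [CommSemiring R] {σ : Equiv.Perm n} {f : n → R}
    (hf : ∀ i, f (σ i) = f i) (v : n → R) : Commute (diagonal f) (monomialMatrix σ v) := by
  ext i j
  rw [diagonal_mul, mul_diagonal, monomialMatrix_apply]
  split_ifs with hij
  · rw [← hij, hf, mul_comm]
  · simp only [mul_zero, zero_mul]

end Monomial

section Exchange

variable {n R : Type*} [Fintype n] [DecidableEq n]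

/-- The matrix `∑ f(k, p) E_{kk} ⊗ E_{pp} + ∑ g(k, p) E_{kp} ⊗ E_{pk}`: the general form of an
R-matrix that can only preserve or exchange the two tensor indices. -/
def exchangeMatrix [NonAssocSemiring R] (f g : n × n → R) : Matrix (n × n) (n × n) R :=
  diagonal f + diagonal g * flipMatrix n R

theorem exchangeMatrix_eq_sum [NonAssocSemiring R] (f g : n × n → R) :
    exchangeMatrix f g =
      ∑ k, ∑ p, f (k, p) • (Matrix.single k k (1 : R) ⊗ₖ Matrix.single p p (1 : R)) +
      ∑ k, ∑ p, g (k, p) • (Matrix.single k p (1 : R) ⊗ₖ Matrix.single p k (1 : R)) := by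
  simp only [single_kronecker_single, smul_single, smul_eq_mul, mul_one]
  rw [← Fintype.sum_prod_type' (f := fun k p => Matrix.single (k, p) (k, p) (f (k, p))),
    ← Fintype.sum_prod_type' (f := fun k p => Matrix.single (k, p) (p, k) (g (k, p)))]
  simp only [single_swap_eq_single_mul_flipMatrix, ← Finset.sum_mul, Matrix.sum_single_eq_diagonal,
    exchangeMatrix]

variable [CommSemiring R]

theorem commute_exchangeMatrix_monomialMatrix_kronecker {σ : Equiv.Perm n} {f g : n × n → R}
    (hf : ∀ k p, f (σ k, σ p) = f (k, p)) (hg : ∀ k p, g (σ k, σ p) = g (k, p)) (v : n → R) :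
    Commute (exchangeMatrix f g) (monomialMatrix σ v ⊗ₖ monomialMatrix σ v) := by
  have commute_diagonal {h : n × n → R} (hh : ∀ k p, h (σ k, σ p) = h (k, p)) :
      Commute (diagonal h) (monomialMatrix σ v ⊗ₖ monomialMatrix σ v) := by
    rw [monomialMatrix_kronecker_monomialMatrix]
    exact commute_diagonal_monomialMatrix (fun i => hh i.1 i.2) _
  have commute_flip : Commute (flipMatrix n R) (monomialMatrix σ v ⊗ₖ monomialMatrix σ v) :=
    flipMatrix_mul_kronecker _ _
  exact (commute_diagonal hf).add_left ((commute_diagonal hg).mul_left commute_flip)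

theorem commute_exchangeMatrix_sub_addRight_kronecker {G : Type*} [AddGroup G] [Fintype G]
    [DecidableEq G] (f g : G → R) (s : G) (v : G → R) :
    Commute (exchangeMatrix (fun i => f (i.2 - i.1)) (fun i => g (i.2 - i.1)))
      (monomialMatrix (Equiv.addRight s) v ⊗ₖ monomialMatrix (Equiv.addRight s) v) :=
  commute_exchangeMatrix_monomialMatrix_kronecker
    (fun k p => congrArg f (add_sub_add_right_eq_sub p k s))
    (fun k p => congrArg g (add_sub_add_right_eq_sub p k s)) v

end Exchange

theorem sum_sum_lt_add_swap {ι M : Type*} [Fintype ι] [LinearOrder ι] [AddCommMonoid M]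
    {F : ι → ι → M} (hF : ∀ k, F k k = 0) :
    (∑ k, ∑ p, if k < p then F k p + F p k else 0) = ∑ k, ∑ p, F k p := by
  calc (∑ k, ∑ p, if k < p then F k p + F p k else 0)
      = (∑ k, ∑ p, if k < p then F k p else 0) + ∑ p, ∑ k, if k < p then F p k else 0 := by
        rw [Finset.sum_comm (f := fun p k => if k < p then F p k else 0)]
        simp only [ite_add_zero, Finset.sum_add_distrib]
    _ = ∑ k, ∑ p, F k p := by
        simp only [← Finset.sum_add_distrib]
        refine Fintype.sum_congr _ _ fun k => Fintype.sum_congr _ _ fun p => ?_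
        obtain hkp | rfl | hpk := lt_trichotomy k p
        · rw [if_pos hkp, if_neg hkp.asymm, add_zero]
        · simp only [hF, lt_irrefl, if_false, add_zero]
        · rw [if_neg hpk.asymm, if_pos hpk, zero_add]

/-- The weight of `E_{kk} ⊗ E_{pp}` in `R_q(u)`, as a function of `p - k` modulo 3. -/
noncomputable def diagonalWeight (q u : ℂ) : Fin 3 → ℂ :=
  ![u ^ 3 * q - (u ^ 3 * q)⁻¹, u ^ 3 - (u ^ 3)⁻¹, u ^ 3 - (u ^ 3)⁻¹]

/-- The weight of `E_{kp} ⊗ E_{pk}` in `R_q(u)`, as a function of `p - k` modulo 3; it is set to `0`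
for `p = k` because that matrix is already counted by `diagonalWeight`. -/
noncomputable def exchangeWeight (q u : ℂ) : Fin 3 → ℂ :=
  ![0, (q - q⁻¹) * u, (q - q⁻¹) * u⁻¹]

theorem diagonalWeight_of_ne_zero (q u : ℂ) {d : Fin 3} (hd : d ≠ 0) :
    diagonalWeight q u d = u ^ 3 - (u ^ 3)⁻¹ := by
  fin_cases d
  · exact absurd rfl hd
  · rfl
  · rfl

theorem exchangeWeight_sub_of_lt (q u : ℂ) {k p : Fin 3} (hkp : k < p) :
    exchangeWeight q u (p - k) =
      (q - q⁻¹) * u ^ ((3 : ℤ) - 2 * (((p : ℕ) : ℤ) - ((k : ℕ) : ℤ))) := by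
  fin_cases k <;> fin_cases p <;> simp [exchangeWeight] at hkp ⊢

theorem exchangeWeight_sub_of_gt (q u : ℂ) {k p : Fin 3} (hpk : p < k) :
    exchangeWeight q u (p - k) =
      (q - q⁻¹) * u ^ (2 * (((k : ℕ) : ℤ) - ((p : ℕ) : ℤ)) - (3 : ℤ)) := by
  fin_cases k <;> fin_cases p <;> simp [exchangeWeight] at hpk ⊢

theorem RpM_eq_exchangeMatrix (q u : ℂ) :
    RpM q u = exchangeMatrix (fun i => diagonalWeight q u (i.2 - i.1))
      (fun i => exchangeWeight q u (i.2 - i.1)) := by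
  rw [RpM, exchangeMatrix_eq_sum]
  refine congrArg₂ (· + ·) ?_ ?_
  · refine Fintype.sum_congr _ _ fun k => Fintype.sum_congr _ _ fun p => ?_
    split_ifs with hkp
    · rw [hkp, sub_self]
      rfl
    · rw [diagonalWeight_of_ne_zero q u (sub_ne_zero.mpr (Ne.symm hkp)), Eb, Eb]
  · have exchange_self (k : Fin 3) :
        exchangeWeight q u (k - k) • (Eb k k ⊗ₖ Eb k k) = 0 := by
      rw [sub_self]
      exact zero_smul ℂ _
    refine Eq.trans ?_ (sum_sum_lt_add_swap
      (F := fun k p => exchangeWeight q u (p - k) • (Eb k p ⊗ₖ Eb p k)) exchange_self)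
    simp only [Finset.smul_sum]
    refine Fintype.sum_congr _ _ fun k => Fintype.sum_congr _ _ fun p => ?_
    split_ifs with hkp
    · rw [exchangeWeight_sub_of_lt q u hkp, exchangeWeight_sub_of_gt q u hkp, smul_add, mul_smul,
        mul_smul]
    · exact smul_zero _

theorem commute_RpM_addRight_kronecker (q u : ℂ) (s : Fin 3) (v : Fin 3 → ℂ) :
    Commute (RpM q u)
      (monomialMatrix (Equiv.addRight s) v ⊗ₖ monomialMatrix (Equiv.addRight s) v) := by
  rw [RpM_eq_exchangeMatrix]
  exact commute_exchangeMatrix_sub_addRight_kronecker _ _ s v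

theorem Ktw1_eq_monomialMatrix (α β γ : ℂ) :
    Ktw1 α β γ = monomialMatrix (Equiv.addRight 0) ![α, β, γ] := by
  rw [Ktw1, monomialMatrix, Equiv.addRight_zero, permMatrix_one, mul_one]

theorem Ktw2_eq_monomialMatrix (α β γ : ℂ) :
    Ktw2 α β γ = monomialMatrix (Equiv.addRight 2) ![α, β, γ] := by
  ext i j
  fin_cases i <;> fin_cases j <;> simp [Ktw2, Eb, monomialMatrix_apply]

theorem Ktw3_eq_monomialMatrix (α β γ : ℂ) :
    Ktw3 α β γ = monomialMatrix (Equiv.addRight 1) ![β, γ, α] := by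
  ext i j
  fin_cases i <;> fin_cases j <;> simp [Ktw3, Eb, monomialMatrix_apply]

/-- the cyclic twist matrices `K⁽²⁾`, `K⁽³⁾` and every diagonal
matrix `K⁽¹⁾` are symmetries of the principal gradation R-matrix. -/
theorem twist_symmetries_principal (q : ℂ) (hq : q ≠ 0) (α β γ : ℂ) :
    (∀ u : ℂ, u ≠ 0 →
        RpM q u * (Ktw2 α β γ ⊗ₖ Ktw2 α β γ) = (Ktw2 α β γ ⊗ₖ Ktw2 α β γ) * RpM q u)
    ∧ (∀ u : ℂ, u ≠ 0 →
        RpM q u * (Ktw3 α β γ ⊗ₖ Ktw3 α β γ) = (Ktw3 α β γ ⊗ₖ Ktw3 α β γ) * RpM q u)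
    ∧ (∀ u : ℂ, u ≠ 0 →
        RpM q u * (Ktw1 α β γ ⊗ₖ Ktw1 α β γ) = (Ktw1 α β γ ⊗ₖ Ktw1 α β γ) * RpM q u) := by
  rw [Ktw1_eq_monomialMatrix, Ktw2_eq_monomialMatrix, Ktw3_eq_monomialMatrix]
  exact ⟨fun u _ => (commute_RpM_addRight_kronecker q u _ _).eq,
    fun u _ => (commute_RpM_addRight_kronecker q u _ _).eq,
    fun u _ => (commute_RpM_addRight_kronecker q u _ _).eq⟩
end

section
/- Assume q ∈ ℂ with q ≠ 0 and q² ≠ 1, and let p ∈ ℂ be a cube root of q (p³ = q). Then the matrix P⁻ := R_q(p⁻¹)/(2(q⁻¹ − q)) ∈ End(ℂ³ ⊗ ℂ³) is given explicitly by P⁻ = (1/2) Σ_{k≠p} E_{kk}⊗E_{pp} − (1/(2p)) (E₁₂⊗E₂₁ + E₂₃⊗E₃₂ + E₃₁⊗E₁₃) − (p/2) (E₂₁⊗E₁₂ + E₃₂⊗E₂₃ + E₁₃⊗E₃₁), and it is an idempotent of trace 3: (P⁻)² = P⁻ and tr(P⁻) = 3. This is the q-deformed antisymmetric projector entering the fusion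 procedure. -/
open Matrix Kronecker BigOperators

/-! Let `T` be the flip of `ℂ³ ⊗ ℂ³` restricted to the span of the `e k ⊗ e l` with `k ≠ l`, its
entries being weighted by reciprocal pairs `w k l`, `w l k = (w k l)⁻¹`. Then `T²` is the projection
onto that span and `T³ = T`, so `(T² - T) / 2` is the projection onto the `-1` eigenspace of `T`.
Since `T` has zero diagonal, the trace of this projection is half of the dimension `3² - 3` of the
span. At `u³ = q⁻¹` the coefficient of `E k k ⊗ E k k` in `R_q(u)` vanishes, and what remains is
`(q⁻¹ - q) (T² - T)` with powers of `u` as the weights. -/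

section

variable {R A : Type*} [CommRing R] [Invertible (2 : R)] [Ring A] [Algebra R A]

theorem isIdempotentElem_invOf_two_smul_sq_sub_self {t : A} (ht : t ^ 3 = t) :
    IsIdempotentElem (⅟(2 : R) • (t ^ 2 - t)) := by
  have ht4 : t ^ 4 = t ^ 2 := by rw [pow_succ, ht, sq]
  have hsq : (t ^ 2 - t) * (t ^ 2 - t) = (2 : R) • (t ^ 2 - t) :=
    calc (t ^ 2 - t) * (t ^ 2 - t) = t ^ 4 - t ^ 3 - t ^ 3 + t ^ 2 := by noncomm_ring
      _ = (2 : R) • (t ^ 2 - t) := by rw [ht4, ht, two_smul]; abel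
  rw [IsIdempotentElem, smul_mul_smul_comm, hsq, smul_smul, mul_assoc, invOf_mul_self, mul_one]

end

theorem swap_mem_offDiag {ι : Type*} {s : Finset ι} {x : ι × ι} (hx : x ∈ s.offDiag) :
    x.swap ∈ s.offDiag := by
  simpa [and_left_comm, eq_comm] using hx

section

variable {ι M : Type*} [Fintype ι] [AddCommMonoid M]

theorem sum_offDiag_univ_eq_sum_sum_ite_ne [DecidableEq ι] (f : ι × ι → M) :
    ∑ x ∈ Finset.univ.offDiag, f x = ∑ i, ∑ j, if i ≠ j then f (i, j) else 0 := by
  have hfilter : (Finset.univ : Finset ι).offDiag =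
      Finset.univ.filter fun x : ι × ι => x.1 ≠ x.2 := by
    ext x
    simp
  rw [hfilter, Finset.sum_filter, Fintype.sum_prod_type]

theorem sum_offDiag_univ_eq_sum_sum_ite_lt [LinearOrder ι] (f : ι × ι → M) :
    ∑ x ∈ Finset.univ.offDiag, f x =
      ∑ i, ∑ j, if i < j then f (i, j) + f (j, i) else 0 := by
  have hsplit (i j : ι) : (if i ≠ j then f (i, j) else 0) =
      (if i < j then f (i, j) else 0) + if j < i then f (i, j) else 0 := by
    rcases lt_trichotomy i j with h | rfl | h <;> simp [*, ne_of_lt, ne_of_gt, not_lt_of_gt]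
  simp only [sum_offDiag_univ_eq_sum_sum_ite_ne, hsplit, ite_add_zero, Finset.sum_add_distrib]
  rw [Finset.sum_comm (f := fun i j => if j < i then f (i, j) else 0)]

end

theorem sum_single_mul_sum_single {m n R : Type*} [Fintype m] [DecidableEq m] [DecidableEq n]
    [NonUnitalNonAssocSemiring R] {s : Finset m} {f : m → m} (hf : ∀ x ∈ s, f x ∈ s)
    (g : m → n) (a b : m → R) :
    (∑ x ∈ s, single x (f x) (a x)) * ∑ x ∈ s, single x (g x) (b x) =
      ∑ x ∈ s, single x (g (f x)) (a x * b (f x)) := by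
  rw [Matrix.sum_mul]
  refine Finset.sum_congr rfl fun x hx => ?_
  have hne : ∀ y ∈ s, y ≠ f x → single x (f x) (a x) * single y (g y) (b y) = 0 :=
    fun y _ hy => single_mul_single_of_ne _ _ _ _ hy.symm _
  rw [Matrix.mul_sum, Finset.sum_eq_single_of_mem (f x) (hf x hx) hne, single_mul_single_same]

section

variable {ι R : Type*} [Fintype ι] [DecidableEq ι]

variable (ι R) in
/-- The projection of `Rⁿ ⊗ Rⁿ` onto the span of the vectors `e i ⊗ e j` with `i ≠ j`. -/
def offDiagProj [Semiring R] : Matrix (ι × ι) (ι × ι) R :=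
  ∑ x ∈ Finset.univ.offDiag, single x x 1

/-- The sum over `i ≠ j` of `w i j • E i j ⊗ E j i`: the flip `e j ⊗ e i ↦ e i ⊗ e j` with
weights `w i j`, vanishing on the vectors `e i ⊗ e i`. -/
def twistedFlip [Semiring R] (w : ι → ι → R) : Matrix (ι × ι) (ι × ι) R :=
  ∑ x ∈ Finset.univ.offDiag, single x x.swap (w x.1 x.2)

/-- The antisymmetrizer of `Rⁿ ⊗ Rⁿ` defined by the weighted flip `twistedFlip w`; the constant
weight `1` gives the usual one, `e i ⊗ e j ↦ (e i ⊗ e j - e j ⊗ e i) / 2`. -/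
def twistedAntisymmetrizer [CommRing R] [Invertible (2 : R)] (w : ι → ι → R) :
    Matrix (ι × ι) (ι × ι) R :=
  ⅟(2 : R) • (offDiagProj ι R - twistedFlip w)

theorem offDiagProj_mul_twistedFlip [Semiring R] (w : ι → ι → R) :
    offDiagProj ι R * twistedFlip w = twistedFlip w := by
  simp only [offDiagProj, twistedFlip, sum_single_mul_sum_single (f := fun x => x) fun _ hx => hx,
    one_mul]

theorem twistedFlip_sq [Semiring R] {w : ι → ι → R} (hw : Pairwise fun i j => w i j * w j i = 1) :
    twistedFlip w ^ 2 = offDiagProj ι R := by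
  rw [sq, twistedFlip, sum_single_mul_sum_single fun _ => swap_mem_offDiag, offDiagProj]
  refine Finset.sum_congr rfl fun x hx => ?_
  rw [Prod.swap_swap, Prod.fst_swap, Prod.snd_swap, hw (Finset.mem_offDiag.mp hx).2.2]

theorem twistedFlip_pow_three [Semiring R] {w : ι → ι → R}
    (hw : Pairwise fun i j => w i j * w j i = 1) : twistedFlip w ^ 3 = twistedFlip w := by
  rw [pow_succ, twistedFlip_sq hw, offDiagProj_mul_twistedFlip]

theorem trace_twistedFlip [Semiring R] (w : ι → ι → R) : (twistedFlip w).trace = 0 := by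
  rw [twistedFlip, trace_sum]
  refine Finset.sum_eq_zero fun x hx => trace_single_eq_of_ne _ _ _ fun h => ?_
  exact (Finset.mem_offDiag.mp hx).2.2 (congrArg Prod.fst h)

theorem trace_offDiagProj [Semiring R] :
    (offDiagProj ι R).trace = 2 * (Fintype.card ι).choose 2 := by
  simp only [offDiagProj, trace_sum, trace_single_eq_same, Finset.sum_const, nsmul_one]
  rw [← Finset.card_univ, ← Sym2.card_image_offDiag, ← Sym2.two_mul_card_image_offDiag,
    Nat.cast_mul, Nat.cast_two]

theorem isIdempotentElem_twistedAntisymmetrizer [CommRing R] [Invertible (2 : R)] {w : ι → ι → R}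
    (hw : Pairwise fun i j => w i j * w j i = 1) :
    IsIdempotentElem (twistedAntisymmetrizer w) := by
  rw [twistedAntisymmetrizer, ← twistedFlip_sq hw]
  exact isIdempotentElem_invOf_two_smul_sq_sub_self (twistedFlip_pow_three hw)

theorem trace_twistedAntisymmetrizer [CommRing R] [Invertible (2 : R)] (w : ι → ι → R) :
    (twistedAntisymmetrizer w).trace = (Fintype.card ι).choose 2 := by
  rw [twistedAntisymmetrizer, trace_smul, trace_sub, trace_offDiagProj, trace_twistedFlip,
    sub_zero, smul_eq_mul, invOf_mul_cancel_left]

end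

/-- The power of `u` in front of `E k l ⊗ E l k` in the principal gradation R-matrix of
`U_q(gl_N^)` with spectral parameter `u ^ N`, as a single formula for `k < l` and `k > l`. -/
def principalExponent {N : ℕ} (k l : Fin N) : ℤ :=
  N * ((l : ℤ) - k).sign - 2 * ((l : ℤ) - k)

/-- The weights `u ^ principalExponent k l` of the flip part of the principal gradation
R-matrix. -/
noncomputable def principalWeight {K : Type*} [DivisionRing K] {N : ℕ} (u : K) (k l : Fin N) : K :=
  u ^ principalExponent k l

theorem principalExponent_of_lt {N : ℕ} {k l : Fin N} (h : k < l) :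
    principalExponent k l = N - 2 * ((l : ℤ) - k) := by
  rw [principalExponent, Int.sign_eq_one_of_pos (by simpa using h), mul_one]

theorem principalExponent_swap {N : ℕ} (k l : Fin N) :
    principalExponent l k = -principalExponent k l := by
  rw [principalExponent, principalExponent, ← neg_sub (l : ℤ) k, Int.sign_neg]
  ring

theorem principalWeight_mul_principalWeight_swap {K : Type*} [DivisionRing K] {N : ℕ} {u : K}
    (hu : u ≠ 0) (k l : Fin N) : principalWeight u k l * principalWeight u l k = 1 := by
  rw [principalWeight, principalWeight, principalExponent_swap k l, ← zpow_add₀ hu, add_neg_cancel,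
    zpow_zero]

theorem Eb_kronecker_Eb (i j k l : Fin 3) : Eb i j ⊗ₖ Eb k l = single (i, k) (j, l) 1 := by
  rw [Eb, Eb, single_kronecker_single, mul_one]

theorem offDiagProj_eq_sum_Eb_kronecker_Eb :
    offDiagProj (Fin 3) ℂ = ∑ k, ∑ l, if k ≠ l then Eb k k ⊗ₖ Eb l l else 0 := by
  simp only [offDiagProj, sum_offDiag_univ_eq_sum_sum_ite_ne, Eb_kronecker_Eb]

theorem twistedFlip_eq_sum_Eb_kronecker_Eb (w : Fin 3 → Fin 3 → ℂ) :
    twistedFlip w = ∑ k, ∑ l,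
      if k < l then w k l • (Eb k l ⊗ₖ Eb l k) + w l k • (Eb l k ⊗ₖ Eb k l) else 0 := by
  simp only [twistedFlip, sum_offDiag_univ_eq_sum_sum_ite_lt, Eb_kronecker_Eb, smul_single,
    smul_eq_mul, mul_one, Prod.swap_prod_mk]

theorem twistedFlip_principalWeight_inv (p : ℂ) :
    twistedFlip (principalWeight p⁻¹) =
      p⁻¹ • (Eb 0 1 ⊗ₖ Eb 1 0 + Eb 1 2 ⊗ₖ Eb 2 1 + Eb 2 0 ⊗ₖ Eb 0 2) +
        p • (Eb 1 0 ⊗ₖ Eb 0 1 + Eb 2 1 ⊗ₖ Eb 1 2 + Eb 0 2 ⊗ₖ Eb 2 0) := by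
  have hexp : principalExponent (0 : Fin 3) 1 = 1 ∧ principalExponent (1 : Fin 3) 2 = 1 ∧
      principalExponent (2 : Fin 3) 0 = 1 ∧ principalExponent (1 : Fin 3) 0 = -1 ∧
      principalExponent (2 : Fin 3) 1 = -1 ∧ principalExponent (0 : Fin 3) 2 = -1 := by
    decide
  simp only [twistedFlip_eq_sum_Eb_kronecker_Eb, Fin.sum_univ_three, principalWeight, hexp,
    Fin.reduceLT, ↓reduceIte, zpow_one, _root_.zpow_neg, inv_inv]
  module

theorem RpM_eq_smul_offDiagProj_sub_twistedFlip {q u : ℂ} (h : u ^ 3 * q = 1) :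
    RpM q u = (q⁻¹ - q) • (offDiagProj (Fin 3) ℂ - twistedFlip (principalWeight u)) := by
  have hu3 : u ^ 3 = q⁻¹ := eq_inv_of_mul_eq_one_left h
  have hflip : twistedFlip (principalWeight u) = ∑ k : Fin 3, ∑ l : Fin 3,
      if k < l then
        u ^ ((3 : ℤ) - 2 * (((l : ℕ) : ℤ) - ((k : ℕ) : ℤ))) • (Eb k l ⊗ₖ Eb l k)
          + u ^ (2 * (((l : ℕ) : ℤ) - ((k : ℕ) : ℤ)) - (3 : ℤ)) • (Eb l k ⊗ₖ Eb k l)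
      else 0 := by
    rw [twistedFlip_eq_sum_Eb_kronecker_Eb]
    refine Finset.sum_congr rfl fun k _ => Finset.sum_congr rfl fun l _ => if_ctx_congr Iff.rfl
      (fun hkl => ?_) fun _ => rfl
    rw [principalWeight, principalWeight, principalExponent_swap k l, principalExponent_of_lt hkl,
      neg_sub, Nat.cast_ofNat]
  have hdiag : (q⁻¹ - q) • offDiagProj (Fin 3) ℂ = ∑ k : Fin 3, ∑ l : Fin 3,
      if k = l then (u ^ 3 * q - (u ^ 3 * q)⁻¹) • (Eb k k ⊗ₖ Eb k k)
      else (u ^ 3 - (u ^ 3)⁻¹) • (Eb k k ⊗ₖ Eb l l) := by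
    simp only [h, inv_one, sub_self, zero_smul]
    simp only [offDiagProj_eq_sum_Eb_kronecker_Eb, Finset.smul_sum, smul_ite, smul_zero, ite_not,
      hu3, inv_inv, ne_eq]
  rw [RpM, ← hflip, ← hdiag]
  module

theorem inv_two_mul_smul_RpM_eq_twistedAntisymmetrizer {q u : ℂ} (hq2 : q ^ 2 ≠ 1)
    (h : u ^ 3 * q = 1) :
    (2 * (q⁻¹ - q))⁻¹ • RpM q u = twistedAntisymmetrizer (principalWeight u) := by
  have hq : q ≠ 0 := right_ne_zero_of_mul_eq_one h
  have hc : q⁻¹ - q ≠ 0 := by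
    rwa [sub_ne_zero, ne_comm, ne_eq, ← mul_eq_one_iff_eq_inv₀ hq, ← sq]
  rw [RpM_eq_smul_offDiagProj_sub_twistedFlip h, twistedAntisymmetrizer, invOf_eq_inv, mul_inv,
    mul_smul, inv_smul_smul₀ hc]

theorem twistedAntisymmetrizer_principalWeight_inv (p : ℂ) :
    twistedAntisymmetrizer (principalWeight p⁻¹) =
      (1 / 2 : ℂ) • (∑ k : Fin 3, ∑ l : Fin 3, if k ≠ l then Eb k k ⊗ₖ Eb l l else 0)
        - (2 * p)⁻¹ • (Eb 0 1 ⊗ₖ Eb 1 0 + Eb 1 2 ⊗ₖ Eb 2 1 + Eb 2 0 ⊗ₖ Eb 0 2)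
        - (p / 2) • (Eb 1 0 ⊗ₖ Eb 0 1 + Eb 2 1 ⊗ₖ Eb 1 2 + Eb 0 2 ⊗ₖ Eb 2 0) := by
  rw [twistedAntisymmetrizer, offDiagProj_eq_sum_Eb_kronecker_Eb, twistedFlip_principalWeight_inv,
    invOf_eq_inv, mul_inv]
  module

/-- explicit form, idempotency and trace of the q-deformed
antisymmetric projector `P⁻ = R_q(p⁻¹)/(2(q⁻¹ − q))`. -/
theorem q_antisymmetric_projector (q : ℂ) (hq : q ≠ 0) (hq2 : q ^ 2 ≠ 1)
    (p : ℂ) (hp : p ^ 3 = q) :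
    (2 * (q⁻¹ - q))⁻¹ • RpM q p⁻¹
      = (1 / 2 : ℂ) • (∑ k : Fin 3, ∑ l : Fin 3, if k ≠ l then Eb k k ⊗ₖ Eb l l else 0)
        - (2 * p)⁻¹ • (Eb 0 1 ⊗ₖ Eb 1 0 + Eb 1 2 ⊗ₖ Eb 2 1 + Eb 2 0 ⊗ₖ Eb 0 2)
        - (p / 2) • (Eb 1 0 ⊗ₖ Eb 0 1 + Eb 2 1 ⊗ₖ Eb 1 2 + Eb 0 2 ⊗ₖ Eb 2 0)
    ∧ ((2 * (q⁻¹ - q))⁻¹ • RpM q p⁻¹) * ((2 * (q⁻¹ - q))⁻¹ • RpM q p⁻¹)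
        = (2 * (q⁻¹ - q))⁻¹ • RpM q p⁻¹
    ∧ ((2 * (q⁻¹ - q))⁻¹ • RpM q p⁻¹).trace = 3 := by
  have hp0 : p ≠ 0 := by
    rintro rfl
    exact hq (by simp [← hp])
  have hu : p⁻¹ ^ 3 * q = 1 := by rw [inv_pow, hp, inv_mul_cancel₀ hq]
  have hweight : Pairwise fun k l : Fin 3 =>
      principalWeight p⁻¹ k l * principalWeight p⁻¹ l k = 1 :=
    fun k l _ => principalWeight_mul_principalWeight_swap (inv_ne_zero hp0) k l
  have htrace : (twistedAntisymmetrizer (principalWeight (N := 3) p⁻¹)).trace = 3 := by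
    simp [trace_twistedAntisymmetrizer]
  rw [inv_two_mul_smul_RpM_eq_twistedAntisymmetrizer hq2 hu]
  exact ⟨twistedAntisymmetrizer_principalWeight_inv p,
    isIdempotentElem_twistedAntisymmetrizer hweight, htrace⟩
end
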